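/- For any ideals I, H, J of A = K[x₁,…,xₙ] with I and H proper, β(I ∩ H, J) = β(I, J) ∩ β(H, J). -/

import Mathlib

open scoped Classical

noncomputable section

/-- A semigroup order on monomials: a strict total order on exponent vectors (written
additively; the monomial `1` corresponds to `0`) compatible with multiplication. -/
def IsSemigroupOrder {σ : Type*} (lt : (σ →₀ ℕ) → (σ →₀ ℕ) → Prop) : Prop :=
  IsStrictTotalOrder (σ →₀ ℕ) lt ∧ ∀ a b c : σ →₀ ℕ, lt a b → lt (c + a) (c + b)

/-- The variable `i` is local for the order `lt`, i.e. `x_i < 1`. -/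
def IsLocalVar {σ : Type*} (lt : (σ →₀ ℕ) → (σ →₀ ℕ) → Prop) (i : σ) : Prop :=
  lt (Finsupp.single i 1) 0

/-- A control order: a semigroup order under which every monomial divisible by a local
variable is `< 1`. -/
def IsControlOrder {σ : Type*} (lt : (σ →₀ ℕ) → (σ →₀ ℕ) → Prop) : Prop :=
  IsSemigroupOrder lt ∧ ∀ m : σ →₀ ℕ, (∃ i, IsLocalVar lt i ∧ m i ≠ 0) → lt m 0

/-- `m` is the leading monomial of `g` w.r.t. `lt`. -/
def IsLeadingMonomial {K : Type*} [CommSemiring K] {σ : Type*}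
    (lt : (σ →₀ ℕ) → (σ →₀ ℕ) → Prop) (g : MvPolynomial σ K) (m : σ →₀ ℕ) : Prop :=
  m ∈ g.support ∧ ∀ m' ∈ g.support, m' ≠ m → lt m' m

/-- The multiplicative set `S = {1 + g : g = 0 or lt(g) < 1}`. -/
def SDen (K : Type*) [CommSemiring K] {σ : Type*}
    (lt : (σ →₀ ℕ) → (σ →₀ ℕ) → Prop) : Set (MvPolynomial σ K) :=
  {f | ∃ g : MvPolynomial σ K, f = 1 + g ∧
    (g = 0 ∨ ∃ m, IsLeadingMonomial lt g m ∧ lt m 0)}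

/-- `I = ⋂ i ∈ s, Q i` is a minimal primary decomposition: every `Q i` is primary, the
radicals are pairwise distinct, and no component contains the intersection of the others. -/
def MinPrimDecOn {R : Type*} [CommRing R] {ι : Type*} (I : Ideal R) (Q : ι → Ideal R)
    (s : Finset ι) : Prop :=
  I = ⨅ i ∈ s, Q i ∧ (∀ i ∈ s, (Q i).IsPrimary) ∧
    (∀ i ∈ s, ∀ j ∈ s, (Q i).radical = (Q j).radical → i = j) ∧
    ∀ i ∈ s, ¬ (⨅ j ∈ s.erase i, Q j) ≤ Q i

/-- The extraction determined by the decomposition `Q` (over `s`) and the ideal `J`: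
the intersection of those components `Q i` with `Q i + J ≠ A` (which is `⊤` = the whole
ring when there are no such components). -/
def extractionFrom {R : Type*} [CommRing R] {ι : Type*} (J : Ideal R) (Q : ι → Ideal R)
    (s : Finset ι) : Ideal R :=
  ⨅ i ∈ s.filter (fun i => Q i ⊔ J ≠ ⊤), Q i

/-- `B` is the extraction `β(I,J)` of `I` by `J`. -/
def IsExtraction {R : Type*} [CommRing R] (I J B : Ideal R) : Prop :=
  ∃ (k : ℕ) (Q : Fin k → Ideal R), MinPrimDecOn I Q Finset.univ ∧
    B = extractionFrom J Q Finset.univ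

/-- `t ⊆ s` determines an isolated set of primes of the decomposition `Q` over `s`. -/
def IsIsolatedOn {R : Type*} [CommRing R] {ι : Type*} (Q : ι → Ideal R)
    (s t : Finset ι) : Prop :=
  t ⊆ s ∧ ∀ j ∈ s, (∃ i ∈ t, (Q j).radical ≤ (Q i).radical) → j ∈ t

/-- The lifted ideal `W' = ⟨W, t₁ - g₁, …, t_s - g_s⟩ ⊆ A' = K[x₁,…,xₙ,t₁,…,t_s]`. -/
def liftIdeal {K : Type*} [CommRing K] {n s : ℕ} (g : Fin s → MvPolynomial (Fin n) K)
    (W : Ideal (MvPolynomial (Fin n) K)) : Ideal (MvPolynomial (Fin n ⊕ Fin s) K) :=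
  W.map (MvPolynomial.rename (Sum.inl : Fin n → Fin n ⊕ Fin s)).toRingHom ⊔
    Ideal.span (Set.range fun w : Fin s =>
      (MvPolynomial.X (Sum.inr w) : MvPolynomial (Fin n ⊕ Fin s) K) -
        MvPolynomial.rename (Sum.inl : Fin n → Fin n ⊕ Fin s) (g w))

/-- The substitution homomorphism `φ : A' → A`, fixing each `x_i` and sending `t_w ↦ g_w`. -/
def substHom {K : Type*} [CommRing K] {n s : ℕ} (g : Fin s → MvPolynomial (Fin n) K) :
    MvPolynomial (Fin n ⊕ Fin s) K →ₐ[K] MvPolynomial (Fin n) K :=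
  MvPolynomial.aeval (Sum.elim MvPolynomial.X g)

/-!
Extraction by `J` is contraction from the localization of the ring at the multiplicative set
`1 + J`. A primary component `Q` meets `1 + J` exactly when `Q + J` is the whole ring: such a
component becomes the unit ideal in the localization, while every other one is recovered by
contraction. So `β(I, J)` is the contraction of the extension of `I`, and both extension to a
localization and contraction commute with finite intersections.
-/

section Localization

variable {R : Type*} [CommRing R]

/-- The multiplicative set `1 + J`, encoded as the elements that reduce to `1` modulo `J`. -/
def oneAddSubmonoid (J : Ideal R) : Submonoid R :=
  MonoidHom.mker (Ideal.Quotient.mk J)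

theorem mem_oneAddSubmonoid_iff {J : Ideal R} {s : R} : s ∈ oneAddSubmonoid J ↔ s - 1 ∈ J := by
  rw [oneAddSubmonoid, MonoidHom.mem_mker, ← Ideal.Quotient.mk_eq_mk_iff_sub_mem, map_one]

theorem disjoint_oneAddSubmonoid_iff {J Q : Ideal R} :
    Disjoint (oneAddSubmonoid J : Set R) Q ↔ Q ⊔ J ≠ ⊤ := by
  rw [Set.disjoint_left, ne_eq, Ideal.eq_top_iff_one, Submodule.mem_sup]
  push Not
  constructor
  · intro hdisj q hq j hj hsum
    have hqJ : q - 1 ∈ J := by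
      rw [← hsum, sub_add_cancel_left]
      exact J.neg_mem hj
    exact hdisj (mem_oneAddSubmonoid_iff.mpr hqJ) hq
  · intro hsum s hs hsQ
    exact hsum s hsQ (-(s - 1)) (J.neg_mem (mem_oneAddSubmonoid_iff.mp hs)) (by ring)

/-- The saturation of `I` with respect to `1 + J`: the contraction to `R` of the extension of `I` to
the localization at `1 + J`. It describes the extraction of `I` by `J` without reference to a
primary decomposition. -/
def oneAddSaturation (J I : Ideal R) : Ideal R :=
  (I.map (algebraMap R (Localization (oneAddSubmonoid J)))).under R

theorem oneAddSaturation_inf (J I H : Ideal R) :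
    oneAddSaturation J (I ⊓ H) = oneAddSaturation J I ⊓ oneAddSaturation J H := by
  simp only [oneAddSaturation, IsLocalization.map_inf (oneAddSubmonoid J), Ideal.under,
    Ideal.comap_inf]

theorem oneAddSaturation_biInf {ι : Type*} (J : Ideal R) (Q : ι → Ideal R) (s : Finset ι) :
    oneAddSaturation J (⨅ i ∈ s, Q i) = ⨅ i ∈ s, oneAddSaturation J (Q i) := by
  simp only [← Finset.inf_eq_iInf, oneAddSaturation, Ideal.under,
    ← IsLocalization.mapFrameHom_apply (oneAddSubmonoid J), map_finset_inf, Ideal.comap_finsetInf,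
    Function.comp_def]

theorem oneAddSaturation_eq_top {J Q : Ideal R} (hQJ : Q ⊔ J = ⊤) : oneAddSaturation J Q = ⊤ := by
  have hmeets : ¬ Disjoint (oneAddSubmonoid J : Set R) Q :=
    mt disjoint_oneAddSubmonoid_iff.mp (not_not.mpr hQJ)
  rw [← IsLocalization.map_algebraMap_ne_top_iff_disjoint (oneAddSubmonoid J)
    (Localization (oneAddSubmonoid J)), not_not] at hmeets
  rw [oneAddSaturation, hmeets, Ideal.under_top]

theorem oneAddSaturation_eq_self {J Q : Ideal R} (hQ : Q.IsPrimary) (hQJ : Q ⊔ J ≠ ⊤) :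
    oneAddSaturation J Q = Q :=
  IsLocalization.under_map_of_isPrimary_disjoint (oneAddSubmonoid J) _ hQ
    (disjoint_oneAddSubmonoid_iff.mpr hQJ)

theorem extractionFrom_eq_oneAddSaturation {ι : Type*} (J : Ideal R) {Q : ι → Ideal R}
    {s : Finset ι} (hQ : ∀ i ∈ s, (Q i).IsPrimary) :
    extractionFrom J Q s = oneAddSaturation J (⨅ i ∈ s, Q i) := by
  simp only [oneAddSaturation_biInf, extractionFrom, Finset.mem_filter, iInf_and]
  refine iInf_congr fun i ↦ iInf_congr fun hi ↦ ?_
  by_cases hQJ : Q i ⊔ J = ⊤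
  · simp [hQJ, oneAddSaturation_eq_top]
  · simp [hQJ, oneAddSaturation_eq_self (hQ i hi)]

theorem stmt_15_general {ι κ τ : Type*} (J : Ideal R) {Q : ι → Ideal R} {s : Finset ι}
    (hQ : ∀ i ∈ s, (Q i).IsPrimary) {N : κ → Ideal R} {t : Finset κ}
    (hN : ∀ i ∈ t, (N i).IsPrimary) {W : τ → Ideal R} {u : Finset τ}
    (hW : ∀ i ∈ u, (W i).IsPrimary)
    (hinf : ⨅ i ∈ u, W i = (⨅ i ∈ s, Q i) ⊓ ⨅ i ∈ t, N i) :
    extractionFrom J W u = extractionFrom J Q s ⊓ extractionFrom J N t := by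
  rw [extractionFrom_eq_oneAddSaturation J hW, hinf, oneAddSaturation_inf,
    ← extractionFrom_eq_oneAddSaturation J hQ, ← extractionFrom_eq_oneAddSaturation J hN]

end Localization

/-- `β(I ∩ H, J) = β(I, J) ∩ β(H, J)`. -/
theorem stmt_15 {K : Type*} [Field K] {n : ℕ}
    (I H J : Ideal (MvPolynomial (Fin n) K)) (hI : I ≠ ⊤) (hH : H ≠ ⊤)
    (k : ℕ) (Q : Fin k → Ideal (MvPolynomial (Fin n) K))
    (hQ : MinPrimDecOn I Q Finset.univ)
    (l : ℕ) (N : Fin l → Ideal (MvPolynomial (Fin n) K))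
    (hN : MinPrimDecOn H N Finset.univ)
    (m : ℕ) (W : Fin m → Ideal (MvPolynomial (Fin n) K))
    (hW : MinPrimDecOn (I ⊓ H) W Finset.univ) :
    extractionFrom J W Finset.univ =
      extractionFrom J Q Finset.univ ⊓ extractionFrom J N Finset.univ :=
  stmt_15_general J hQ.2.1 hN.2.1 hW.2.1 (by rw [← hW.1, ← hQ.1, ← hN.1])
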